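/- arXiv:0911.0354 — 2 statements merged into one kernel-verified Lean document; each statement's English description precedes it below -/
import Mathlib

section
/- Let W be a finitely generated group admitting a Coxeter generating set. Then Aut(W) contains a subgroup A of finite index such that for every α ∈ A and every Coxeter generating set S of W, the sets S and α(S) are angle-compatible Coxeter generating sets of W. -/
/-!
By a theorem of Tits, every finite subgroup of a Coxeter group is conjugate into a finite standard
parabolic subgroup. In finite rank there are finitely many of these, so the pairs generating a
finite subgroup form finitely many conjugacy classes. Automorphisms permute these classes, and the
kernel of this permutation action has finite index in `Aut(W)` and sends every such pair to a
conjugate one.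

For Tits' theorem, let `W` act on the functionals on its geometric representation. Summing over a
finite subgroup `G` the translates of a functional that is positive on all positive roots gives a
`G`-fixed functional which is nonpositive on only finitely many positive roots. Reflecting
repeatedly in simple roots on which it is negative decreases their number, until the functional is
dominant; the stabilizer of a dominant functional is a standard parabolic subgroup.
-/

/-- A finite subset `S` of a group `W` is a *Coxeter generating set* if there is a Coxeter
matrix indexed by `S` and a Coxeter system for that matrix on `W` whose simple reflections
are exactly the elements of `S` (via the inclusion `S ⊆ W`). -/
def IsCoxeterGeneratingSet {W : Type*} [Group W] (S : Set W) : Prop :=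
  S.Finite ∧ ∃ (M : CoxeterMatrix ↥S) (cs : CoxeterSystem M W), ∀ s : S, cs.simple s = (s : W)

/-- Two elements are *adjacent* if they generate a finite subgroup. -/
def AdjacentElems {W : Type*} [Group W] (s s' : W) : Prop :=
  (Subgroup.closure {s, s'} : Set W).Finite

/-- Coxeter generating sets `S` and `R` are *angle-compatible* if every pair of elements
of `S` (allowing equal elements) generating a finite subgroup is conjugate to a pair of
elements of `R`. -/
def AngleCompatible {W : Type*} [Group W] (S R : Set W) : Prop :=
  ∀ s ∈ S, ∀ s' ∈ S, (Subgroup.closure {s, s'} : Set W).Finite →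
    ∃ w : W, ∃ r ∈ R, ∃ r' ∈ R, ({w * s * w⁻¹, w * s' * w⁻¹} : Set W) = {r, r'}

/-- `perpIn S J` is the set `J⊥` of elements of `S ∖ J` commuting with every element
of `J`. -/
def perpIn {W : Type*} [Group W] (S J : Set W) : Set W :=
  {t ∈ S \ J | ∀ j ∈ J, Commute t j}

/-- A set is *irreducible* if it cannot be partitioned into two nonempty subsets that
commute elementwise. -/
def IrreducibleSubset {W : Type*} [Group W] (J : Set W) : Prop :=
  ¬ ∃ K L : Set W, K.Nonempty ∧ L.Nonempty ∧ Disjoint K L ∧ K ∪ L = J ∧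
      ∀ k ∈ K, ∀ l ∈ L, Commute k l

/-- A subset `T` is *connected* in the adjacency graph if any two of its elements are
joined by a path inside `T` whose edges are adjacent pairs. -/
def ConnectedIn {W : Type*} [Group W] (T : Set W) : Prop :=
  ∀ a ∈ T, ∀ b ∈ T,
    Relation.ReflTransGen (fun x y => x ∈ T ∧ y ∈ T ∧ AdjacentElems x y) a b

/-- A Coxeter generating set `S` is *twist-rigid* if for every irreducible spherical subset
`J ⊆ S` the set `S ∖ (J ∪ J⊥)` is connected in the adjacency graph. -/
def IsTwistRigid {W : Type*} [Group W] (S : Set W) : Prop :=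
  ∀ J ⊆ S, IrreducibleSubset J → (Subgroup.closure J : Set W).Finite →
    ConnectedIn (S \ (J ∪ perpIn S J))

lemma mul_pow_mul_mul_pow_swap {N : Type*} [Monoid N] {a b : N} (ha : a * a = 1) (hb : b * b = 1)
    (n : ℕ) : (a * b) ^ n * (b * a) ^ n = 1 := by
  have hab : a * b * (b * a) = 1 := by rw [mul_assoc, ← mul_assoc b, hb, one_mul, ha]
  have hba : b * a * (a * b) = 1 := by rw [mul_assoc, ← mul_assoc a, ha, one_mul, hb]
  rw [← (show Commute (a * b) (b * a) from hab.trans hba.symm).mul_pow, hab, one_pow]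

section Reflections

open Module Polynomial.Chebyshev

variable {R V : Type*} [CommRing R] [AddCommGroup V] [Module R V] {x y : V} {f g : Dual R V} {a : R}

lemma preReflection_mul_self (hf : f x = 2) : preReflection x f * preReflection x f = 1 :=
  LinearMap.ext (involutive_preReflection hf)

lemma preReflection_mul_pow_apply_left (hf : f x = 2) (hg : g y = 2) (hfy : f y = -a)
    (hgx : g x = -a) (n : ℕ) :
    ((preReflection x f * preReflection y g) ^ n) x =
      (S R (2 * n)).eval a • x + (S R (2 * n - 1)).eval a • y := by
  induction n with
  | zero => simp
  | succ n ih =>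
    have h₁ : S R (2 * (n + 1) - 1) = .X * S R (2 * n) - S R (2 * n - 1) := by
      rw [S_eq]; ring_nf
    have h₂ : S R (2 * (n + 1)) = .X * S R (2 * (n + 1) - 1) - S R (2 * n) := by
      rw [S_eq]; ring_nf
    rw [pow_succ', End.mul_apply, ih]
    simp only [Nat.cast_add_one, h₂, h₁, End.mul_apply, preReflection_apply, map_add, map_sub,
      map_smul, hf, hg, hfy, hgx, Polynomial.eval_sub, Polynomial.eval_mul, Polynomial.eval_X]
    module

lemma preReflection_mul_pow_eq_one {K : Type*} [Field K] [Module K V] {f g : Dual K V} {a : K}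
    (hf : f x = 2) (hg : g y = 2) (hfy : f y = -a) (hgx : g x = -a) (ha : 4 - a ^ 2 ≠ 0) {n : ℕ}
    (h₁ : (S K (2 * n)).eval a = 1) (h₀ : (S K (2 * n - 1)).eval a = 0) :
    (preReflection x f * preReflection y g) ^ n = 1 := by
  set T := (preReflection x f * preReflection y g) ^ n with hT
  have hTx : T x = x := by
    rw [hT, preReflection_mul_pow_apply_left hf hg hfy hgx, h₁, h₀]; module
  have hTy : T y = y := by
    have hy : ((preReflection y g * preReflection x f) ^ n) y = y := by
      rw [preReflection_mul_pow_apply_left hg hf hgx hfy, h₁, h₀]; module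
    have hTinv := mul_pow_mul_mul_pow_swap (preReflection_mul_self hf) (preReflection_mul_self hg) n
    simpa [hT, hy] using LinearMap.congr_fun hTinv y
  ext v
  -- Subtracting from `v` its component in the plane of `x` and `y` leaves a vector `u` fixed by
  -- both reflections; `4 - a ^ 2` is the determinant of the linear system for that component.
  obtain ⟨p, q, hfu, hgu⟩ : ∃ p q : K, f (v - p • x - q • y) = 0 ∧ g (v - p • x - q • y) = 0 := by
    refine ⟨(2 * f v + a * g v) / (4 - a ^ 2), (2 * g v + a * f v) / (4 - a ^ 2), ?_, ?_⟩ <;>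
    · simp only [map_sub, map_smul, hf, hg, hfy, hgx, smul_eq_mul]
      field_simp
      ring
  set u := v - p • x - q • y with hu
  have hTu : T u = u := by
    rw [hT, End.pow_apply]
    exact Function.iterate_fixed (by simp [preReflection_apply, hfu, hgu]) n
  have hv : v = u + p • x + q • y := by rw [hu]; abel
  rw [End.one_apply, hv, map_add, map_add, map_smul, map_smul, hTu, hTx, hTy]

lemma bilin_preReflection_self (b : LinearMap.BilinForm R V) (hb : b.IsSymm) (hx : b x x = 2)
    (v : V) : b (preReflection x (b x) v) (preReflection x (b x) v) = b v v := by
  simp only [preReflection_apply, map_sub, map_smul, LinearMap.sub_apply, LinearMap.smul_apply, hx,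
    hb.eq v x, smul_eq_mul]
  ring

end Reflections

section Chebyshev

open Polynomial.Chebyshev Real

lemma sin_pi_div_pos {m : ℕ} (hm : 2 ≤ m) : 0 < sin (π / m) :=
  sin_pos_of_pos_of_lt_pi (by positivity) (div_lt_self pi_pos (by exact_mod_cast hm))

lemma chebyshevS_eval_two_mul_cos_pi_div {m : ℕ} (hm : 2 ≤ m) (n : ℤ) :
    (S ℝ n).eval (2 * cos (π / m)) = sin ((n + 1) * (π / m)) / sin (π / m) := by
  rw [eq_div_iff (sin_pi_div_pos hm).ne', S_two_mul_real_cos]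

lemma chebyshevS_eval_two_mul_cos_pi_div_nonneg {m k : ℕ} (hm : m ≠ 1) (hk : m = 0 ∨ k ≤ m) :
    0 ≤ (S ℝ (k - 1)).eval (2 * cos (π / m)) := by
  obtain rfl | hm₀ := eq_or_ne m 0
  · simp [S_eval_two]
  have hm₂ : 2 ≤ m := by omega
  have hkm : (k : ℝ) ≤ m := by exact_mod_cast hk.resolve_left hm₀
  rw [chebyshevS_eval_two_mul_cos_pi_div hm₂]
  refine div_nonneg (sin_nonneg_of_nonneg_of_le_pi ?_ ?_) (sin_pi_div_pos hm₂).le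
  · push_cast
    rw [sub_add_cancel]
    positivity
  · calc ((k - 1 : ℤ) + 1 : ℝ) * (π / m) = k * (π / m) := by push_cast; ring
      _ ≤ m * (π / m) := by gcongr
      _ = π := by field_simp

end Chebyshev

section AlternatingWord

open CoxeterSystem

variable {B W : Type*} [Group W] {M : CoxeterMatrix B} (cs : CoxeterSystem M W)

lemma exists_eq_mul_wordProd_alternatingWord {w : W} {i j : B} (hw : ¬cs.IsRightDescent w i) :
    ∃ (v : W) (k : ℕ), w = v * cs.wordProd (alternatingWord i j k) ∧
      cs.length w = cs.length v + k ∧ ¬cs.IsRightDescent v i ∧ ¬cs.IsRightDescent v j := by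
  induction h : cs.length w using Nat.strong_induction_on generalizing w i j with
  | _ n ih =>
  subst h
  by_cases hj : cs.IsRightDescent w j
  · obtain ⟨v, k, hv, hk, hvj, hvi⟩ :=
      ih _ hj (j := i) (cs.isRightDescent_iff_not_isRightDescent_mul.mp hj) rfl
    refine ⟨v, k + 1, ?_, ?_, hvi, hvj⟩
    · rw [alternatingWord_succ, cs.wordProd_concat, ← mul_assoc, ← hv,
        cs.simple_mul_simple_cancel_right]
    · rw [← cs.isRightDescent_iff.mp hj, hk, add_assoc]
  · exact ⟨w, 0, by simp [alternatingWord], rfl, hw, hj⟩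

lemma le_of_not_isRightDescent_mul_wordProd_alternatingWord {v : W} {i j : B} {k : ℕ}
    (hlen : cs.length (v * cs.wordProd (alternatingWord i j k)) = cs.length v + k)
    (hdesc : ¬cs.IsRightDescent (v * cs.wordProd (alternatingWord i j k)) i) :
    M i j = 0 ∨ k + 1 ≤ M i j := by
  by_contra! hk
  refine cs.not_isReduced_alternatingWord (m := k + 1) j i (M.symmetric i j ▸ hk.1)
    (M.symmetric i j ▸ hk.2) ?_
  have hup := cs.not_isRightDescent_iff.mp hdesc
  rw [mul_assoc, ← cs.wordProd_concat, ← alternatingWord_succ] at hup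
  have hle := cs.length_mul_le v (cs.wordProd (alternatingWord j i (k + 1)))
  have hge := cs.length_wordProd_le (alternatingWord j i (k + 1))
  rw [length_alternatingWord] at hge
  rw [CoxeterSystem.IsReduced, length_alternatingWord]
  omega

end AlternatingWord

section GeometricRep

open CoxeterSystem Module Polynomial.Chebyshev Real

/-- The simple root `αᵢ` of the geometric representation, whose space has basis `B`. -/
noncomputable abbrev simpleRoot {B : Type*} (i : B) : B →₀ ℝ := Finsupp.single i 1

variable {B : Type*}

lemma simpleRoot_nonneg (i : B) : 0 ≤ simpleRoot i := Finsupp.single_nonneg.mpr zero_le_one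

variable (M : CoxeterMatrix B)

/-- The symmetric bilinear form with `⟨αᵢ, αⱼ⟩ = -2 cos (π / M i j)`, under which every simple root
has square length `2`. An infinite order is encoded as `M i j = 0`; then `π / 0 = 0` gives the usual
value `-2`. -/
noncomputable def coxeterForm : LinearMap.BilinForm ℝ (B →₀ ℝ) :=
  Finsupp.linearCombination ℝ fun i ↦ Finsupp.linearCombination ℝ fun j ↦ -(2 * cos (π / M i j))

lemma coxeterForm_simpleRoot (i j : B) :
    coxeterForm M (simpleRoot i) (simpleRoot j) = -(2 * cos (π / M i j)) := by
  simp [coxeterForm]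

lemma coxeterForm_simpleRoot_self (i : B) :
    coxeterForm M (simpleRoot i) (simpleRoot i) = 2 := by
  simp [coxeterForm_simpleRoot]

lemma coxeterForm_isSymm : (coxeterForm M).IsSymm := by
  have hflip : (coxeterForm M).flip = coxeterForm M := by
    ext i j
    simp [coxeterForm, M.symmetric i j]
  exact ⟨fun v w ↦ LinearMap.congr_fun₂ hflip w v⟩

/-- The action `v ↦ v - ⟨αᵢ, v⟩ αᵢ` of the simple reflection `sᵢ` on the geometric
representation. -/
noncomputable def simpleReflection (i : B) : End ℝ (B →₀ ℝ) :=
  preReflection (simpleRoot i) (coxeterForm M (simpleRoot i))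

lemma simpleReflection_apply (i : B) (v : B →₀ ℝ) :
    simpleReflection M i v = v - coxeterForm M (simpleRoot i) v • simpleRoot i :=
  preReflection_apply ..

lemma simpleReflection_simpleRoot_self (i : B) :
    simpleReflection M i (simpleRoot i) = -simpleRoot i :=
  preReflection_apply_self (coxeterForm_simpleRoot_self M i)

lemma simpleReflection_simpleReflection (i : B) (v : B →₀ ℝ) :
    simpleReflection M i (simpleReflection M i v) = v :=
  involutive_preReflection (coxeterForm_simpleRoot_self M i) v

lemma simpleReflection_isLiftable : M.IsLiftable (simpleReflection M) := by
  intro i j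
  obtain rfl | hij := eq_or_ne i j
  · rw [M.diagonal, pow_one]
    exact preReflection_mul_self (coxeterForm_simpleRoot_self M i)
  obtain h₀ | h₀ := eq_or_ne (M i j) 0
  · rw [h₀, pow_zero]
  have hm : 2 ≤ M i j := by have := M.off_diagonal i j hij; omega
  have hsin := (sin_pi_div_pos hm).ne'
  have hji := coxeterForm_simpleRoot M j i
  rw [M.symmetric] at hji
  refine preReflection_mul_pow_eq_one (a := 2 * cos (π / M i j)) (coxeterForm_simpleRoot_self M i)
    (coxeterForm_simpleRoot_self M j) (coxeterForm_simpleRoot M i j) hji ?_ ?_ ?_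
  · have hdet : 4 - (2 * cos (π / M i j)) ^ 2 = 4 * sin (π / M i j) ^ 2 := by
      rw [sin_sq]; ring
    rw [hdet]
    positivity
  · have hangle : ((2 * M i j : ℤ) + 1 : ℝ) * (π / M i j) = π / M i j + 2 * π := by
      push_cast; field_simp; ring
    rw [chebyshevS_eval_two_mul_cos_pi_div hm, hangle, sin_add_two_pi, div_self hsin]
  · have hangle : ((2 * M i j - 1 : ℤ) + 1 : ℝ) * (π / M i j) = 2 * π := by
      push_cast; field_simp; ring
    rw [chebyshevS_eval_two_mul_cos_pi_div hm, hangle, sin_two_pi, zero_div]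

variable {M} {W : Type*} [Group W] (cs : CoxeterSystem M W)

/-- The geometric (Tits) representation of a Coxeter group. -/
noncomputable def geometricRep : Representation ℝ W (B →₀ ℝ) :=
  cs.lift ⟨simpleReflection M, simpleReflection_isLiftable M⟩

lemma geometricRep_simple (i : B) : geometricRep cs (cs.simple i) = simpleReflection M i :=
  cs.lift_apply_simple _ i

lemma geometricRep_mul_apply (u w : W) (v : B →₀ ℝ) :
    geometricRep cs (u * w) v = geometricRep cs u (geometricRep cs w v) := by
  rw [map_mul, End.mul_apply]

lemma geometricRep_mul_simple_simpleRoot (w : W) (i : B) :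
    geometricRep cs (w * cs.simple i) (simpleRoot i) = -geometricRep cs w (simpleRoot i) := by
  rw [geometricRep_mul_apply, geometricRep_simple, simpleReflection_simpleRoot_self, map_neg]

lemma coxeterForm_geometricRep_self (w : W) (v : B →₀ ℝ) :
    coxeterForm M (geometricRep cs w v) (geometricRep cs w v) = coxeterForm M v v := by
  induction w using cs.simple_induction_left with
  | one => rw [map_one, End.one_apply]
  | mul_simple_left w i ih =>
    rw [geometricRep_mul_apply, geometricRep_simple, simpleReflection,
      bilin_preReflection_self _ (coxeterForm_isSymm M) (coxeterForm_simpleRoot_self M i), ih]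

lemma geometricRep_alternatingWord_simpleRoot (i j : B) (k : ℕ) :
    geometricRep cs (cs.wordProd (alternatingWord i j k)) (simpleRoot i) =
      if Even k then
        (S ℝ k).eval (2 * cos (π / M i j)) • simpleRoot i +
          (S ℝ (k - 1)).eval (2 * cos (π / M i j)) • simpleRoot j
      else
        (S ℝ (k - 1)).eval (2 * cos (π / M i j)) • simpleRoot i +
          (S ℝ k).eval (2 * cos (π / M i j)) • simpleRoot j := by
  have hji := coxeterForm_simpleRoot M j i
  rw [M.symmetric] at hji
  induction k with
  | zero => simp [alternatingWord]
  | succ k ih =>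
    have hrec : S ℝ (k + 1) = .X * S ℝ k - S ℝ (k - 1) := by
      rw [S_eq]; ring_nf
    rw [alternatingWord_succ', cs.wordProd_cons, geometricRep_mul_apply, ih, geometricRep_simple,
      simpleReflection_apply]
    by_cases hk : Even k
    all_goals
      simp only [hk, Nat.even_add_one, not_true_eq_false, not_false_eq_true, if_true, if_false,
        map_add, map_smul, coxeterForm_simpleRoot_self, coxeterForm_simpleRoot M i j, hji, hrec,
        Polynomial.eval_sub, Polynomial.eval_mul, Polynomial.eval_X, smul_eq_mul, Nat.cast_add_one,
        add_sub_cancel_right]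
      module

lemma exists_nonneg_geometricRep_alternatingWord_simpleRoot {i j : B} {k : ℕ} (hij : i ≠ j)
    (hk : M i j = 0 ∨ k + 1 ≤ M i j) :
    ∃ p q : ℝ, 0 ≤ p ∧ 0 ≤ q ∧
      geometricRep cs (cs.wordProd (alternatingWord i j k)) (simpleRoot i) =
        p • simpleRoot i + q • simpleRoot j := by
  have hm : M i j ≠ 1 := M.off_diagonal i j hij
  have hlt := chebyshevS_eval_two_mul_cos_pi_div_nonneg hm (k := k + 1) hk
  rw [Nat.cast_add_one, add_sub_cancel_right] at hlt
  have hle := chebyshevS_eval_two_mul_cos_pi_div_nonneg hm (k := k) (hk.imp_right Nat.le_of_succ_le)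
  rw [geometricRep_alternatingWord_simpleRoot]
  split_ifs
  exacts [⟨_, _, hlt, hle, rfl⟩, ⟨_, _, hle, hlt, rfl⟩]

theorem geometricRep_simpleRoot_nonneg_of_not_isRightDescent {w : W} {i : B}
    (hw : ¬cs.IsRightDescent w i) : 0 ≤ geometricRep cs w (simpleRoot i) := by
  induction h : cs.length w using Nat.strong_induction_on generalizing w i with
  | _ n ih =>
  subst h
  obtain rfl | hw₁ := eq_or_ne w 1
  · simp
  obtain ⟨j, hj⟩ := cs.exists_rightDescent_of_ne_one hw₁
  have hij : i ≠ j := by rintro rfl; exact hw hj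
  -- Splitting off the longest suffix of `w` in `⟨sᵢ, sⱼ⟩` leaves `v`, to which induction applies at
  -- both `i` and `j`; in the plane of `αᵢ` and `αⱼ` the positivity is an explicit computation.
  obtain ⟨v, k, rfl, hlen, hvi, hvj⟩ := exists_eq_mul_wordProd_alternatingWord cs (j := j) hw
  have hlt : cs.length v < cs.length (v * cs.wordProd (alternatingWord i j k)) := by
    have hk : k ≠ 0 := by rintro rfl; simp [alternatingWord, hvj] at hj
    omega
  obtain ⟨p, q, hp, hq, hpq⟩ := exists_nonneg_geometricRep_alternatingWord_simpleRoot cs hij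
    (le_of_not_isRightDescent_mul_wordProd_alternatingWord cs hlen hw)
  rw [geometricRep_mul_apply, hpq, map_add, map_smul, map_smul]
  exact add_nonneg (smul_nonneg hp (ih _ hlt hvi rfl)) (smul_nonneg hq (ih _ hlt hvj rfl))

lemma geometricRep_simpleRoot_nonpos_of_isRightDescent {w : W} {i : B}
    (hw : cs.IsRightDescent w i) : geometricRep cs w (simpleRoot i) ≤ 0 := by
  have := geometricRep_simpleRoot_nonneg_of_not_isRightDescent cs
    (cs.isRightDescent_iff_not_isRightDescent_mul.mp hw)
  rwa [geometricRep_mul_simple_simpleRoot, neg_nonneg] at this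

end GeometricRep

section Roots

open CoxeterSystem Module

variable {B W : Type*} [Group W] {M : CoxeterMatrix B} (cs : CoxeterSystem M W)

/-- The roots of a Coxeter system: the images of the simple roots in the geometric
representation. -/
def IsRoot (β : B →₀ ℝ) : Prop :=
  ∃ (w : W) (i : B), geometricRep cs w (simpleRoot i) = β

namespace IsRoot

variable {cs} {β : B →₀ ℝ}

protected lemma simpleRoot (i : B) : IsRoot cs (simpleRoot i) :=
  ⟨1, i, by rw [map_one, End.one_apply]⟩

lemma map (hβ : IsRoot cs β) (w : W) : IsRoot cs (geometricRep cs w β) := by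
  obtain ⟨u, i, rfl⟩ := hβ
  exact ⟨w * u, i, geometricRep_mul_apply ..⟩

lemma map_simpleReflection (hβ : IsRoot cs β) (i : B) : IsRoot cs (simpleReflection M i β) :=
  geometricRep_simple cs i ▸ hβ.map (cs.simple i)

lemma nonneg_or_nonpos (hβ : IsRoot cs β) : 0 ≤ β ∨ β ≤ 0 := by
  obtain ⟨w, i, rfl⟩ := hβ
  by_cases hw : cs.IsRightDescent w i
  exacts [.inr (geometricRep_simpleRoot_nonpos_of_isRightDescent cs hw),
    .inl (geometricRep_simpleRoot_nonneg_of_not_isRightDescent cs hw)]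

lemma neg (hβ : IsRoot cs β) : IsRoot cs (-β) := by
  obtain ⟨w, i, rfl⟩ := hβ
  exact ⟨w * cs.simple i, i, geometricRep_mul_simple_simpleRoot ..⟩

lemma coxeterForm_self (hβ : IsRoot cs β) : coxeterForm M β β = 2 := by
  obtain ⟨w, i, rfl⟩ := hβ
  rw [coxeterForm_geometricRep_self, coxeterForm_simpleRoot_self]

lemma ne_zero (hβ : IsRoot cs β) : β ≠ 0 := by
  rintro rfl
  simpa using hβ.coxeterForm_self

lemma simpleReflection_nonneg (hβ : IsRoot cs β) (hβ₀ : 0 ≤ β) {i : B} (hi : β ≠ simpleRoot i) :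
    0 ≤ simpleReflection M i β := by
  refine (hβ.map_simpleReflection i).nonneg_or_nonpos.resolve_right fun hneg ↦ hi ?_
  -- `sᵢ` changes only the `i`-th coordinate, so the other coordinates of `β` are `≥ 0` and `≤ 0`.
  have hsingle : β = β i • simpleRoot i := by
    ext j
    obtain rfl | hj := eq_or_ne j i
    · simp
    · have hβj : β j ≤ 0 := by
        simpa [simpleReflection_apply, Finsupp.single_eq_of_ne hj] using hneg j
      simpa [Finsupp.single_eq_of_ne hj] using hβj.antisymm (hβ₀ j)
  have hnorm := hβ.coxeterForm_self
  rw [hsingle, LinearMap.map_smul₂, map_smul, coxeterForm_simpleRoot_self, smul_eq_mul,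
    smul_eq_mul] at hnorm
  have hβi : β i = 1 := by nlinarith [show 0 ≤ β i from hβ₀ i]
  rw [hsingle, hβi, one_smul]

end IsRoot

lemma eq_one_of_geometricRep_simpleRoot_nonneg {w : W}
    (hw : ∀ i, 0 ≤ geometricRep cs w (simpleRoot i)) : w = 1 := by
  by_contra hw₁
  obtain ⟨i, hi⟩ := cs.exists_rightDescent_of_ne_one hw₁
  exact ((IsRoot.simpleRoot i).map w).ne_zero
    ((geometricRep_simpleRoot_nonpos_of_isRightDescent cs hi).antisymm (hw i))

/-- The positive roots sent to negative roots by `w`. -/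
def inversionSet (w : W) : Set (B →₀ ℝ) :=
  {β | IsRoot cs β ∧ 0 ≤ β ∧ geometricRep cs w β ≤ 0}

lemma inversionSet_finite (w : W) : (inversionSet cs w).Finite := by
  induction w using cs.simple_induction_left with
  | one =>
    refine Set.Finite.subset Set.finite_empty fun β ⟨hβ, hβ₀, hβ₁⟩ ↦ hβ.ne_zero ?_
    rw [map_one, End.one_apply] at hβ₁
    exact hβ₁.antisymm hβ₀
  | mul_simple_left w i ih =>
    refine (ih.insert (geometricRep cs w⁻¹ (simpleRoot i))).subset fun β ⟨hβ, hβ₀, hsβ⟩ ↦ ?_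
    rw [geometricRep_mul_apply, geometricRep_simple] at hsβ
    refine or_iff_not_imp_left.mpr fun hne ↦
      ⟨hβ, hβ₀, (hβ.map w).nonneg_or_nonpos.resolve_left fun hwβ ↦ ?_⟩
    have hwβi : geometricRep cs w β ≠ simpleRoot i := fun h ↦
      hne (by rw [← h, Representation.inv_self_apply])
    have hsβ₀ := hsβ.antisymm ((hβ.map w).simpleReflection_nonneg hwβ hwβi)
    exact ((hβ.map w).map_simpleReflection i).ne_zero hsβ₀

lemma inversionSet_injective : Function.Injective (inversionSet cs) := by
  intro u w huw
  refine mul_inv_eq_one.mp (eq_one_of_geometricRep_simpleRoot_nonneg cs fun i ↦ ?_)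
  have hβ := (IsRoot.simpleRoot (cs := cs) i).map w⁻¹
  rw [geometricRep_mul_apply]
  have hwβ : geometricRep cs w (geometricRep cs w⁻¹ (simpleRoot i)) = simpleRoot i :=
    Representation.self_inv_apply ..
  set β := geometricRep cs w⁻¹ (simpleRoot i)
  obtain hβ₀ | hβ₀ := hβ.nonneg_or_nonpos
  · refine (hβ.map u).nonneg_or_nonpos.resolve_right fun huβ ↦ ?_
    have hβw : β ∈ inversionSet cs w := huw ▸ ⟨hβ, hβ₀, huβ⟩
    exact (IsRoot.simpleRoot (cs := cs) i).ne_zero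
      ((hwβ ▸ hβw.2.2).antisymm (simpleRoot_nonneg i))
  · have hβu : -β ∈ inversionSet cs u := by
      rw [huw]
      refine ⟨hβ.neg, neg_nonneg.mpr hβ₀, ?_⟩
      rw [map_neg, hwβ, neg_nonpos]
      exact simpleRoot_nonneg i
    simpa using hβu.2.2

end Roots

section TitsCone

open CoxeterSystem Module

variable {B W : Type*} [Group W] {M : CoxeterMatrix B} (cs : CoxeterSystem M W)
  {y : Dual ℝ (B →₀ ℝ)}

/-- A functional is dominant if it lies in the closed fundamental chamber. -/
def IsDominant (y : Dual ℝ (B →₀ ℝ)) : Prop :=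
  ∀ i, 0 ≤ y (simpleRoot i)

lemma IsDominant.apply_nonneg (hy : IsDominant y) {v : B →₀ ℝ} (hv : 0 ≤ v) : 0 ≤ y v := by
  rw [← v.sum_single, map_finsuppSum]
  refine Finset.sum_nonneg fun i _ ↦ ?_
  beta_reduce
  rw [← Finsupp.smul_single_one, map_smul]
  exact smul_nonneg (hv i) (hy i)

lemma IsDominant.apply_nonpos (hy : IsDominant y) {v : B →₀ ℝ} (hv : v ≤ 0) : y v ≤ 0 := by
  simpa using hy.apply_nonneg (neg_nonneg.mpr hv)

/-- The positive roots on which the functional `y` is nonpositive. Its finiteness encodes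
that `y` lies in the interior of the Tits cone. -/
def nonposRoots (y : Dual ℝ (B →₀ ℝ)) : Set (B →₀ ℝ) :=
  {β | IsRoot cs β ∧ 0 ≤ β ∧ y β ≤ 0}

lemma nonposRoots_sum_subset {ι : Type*} (s : Finset ι) (y : ι → Dual ℝ (B →₀ ℝ))
    (hs : s.Nonempty) :
    nonposRoots cs (∑ a ∈ s, y a) ⊆ ⋃ a ∈ s, nonposRoots cs (y a) := by
  rintro β ⟨hβ, hβ₀, hyβ⟩
  rw [LinearMap.sum_apply] at hyβ
  obtain ⟨a, ha, hya⟩ := Finset.exists_le_of_sum_le hs (hyβ.trans_eq Finset.sum_const_zero.symm)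
  exact Set.mem_biUnion ha ⟨hβ, hβ₀, hya⟩

lemma nonposRoots_comp_geometricRep_subset (w : W) :
    nonposRoots cs (y ∘ₗ geometricRep cs w) ⊆
      inversionSet cs w ∪ geometricRep cs w ⁻¹' nonposRoots cs y := by
  rintro β ⟨hβ, hβ₀, hyβ⟩
  obtain hwβ | hwβ := (hβ.map w).nonneg_or_nonpos
  exacts [.inr ⟨hβ.map w, hwβ, hyβ⟩, .inl ⟨hβ, hβ₀, hwβ⟩]

variable {cs} in
lemma nonposRoots_comp_geometricRep_finite (hy : (nonposRoots cs y).Finite) (w : W) :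
    (nonposRoots cs (y ∘ₗ geometricRep cs w)).Finite :=
  ((inversionSet_finite cs w).union
    (hy.preimage ((geometricRep cs).apply_bijective w).injective.injOn)).subset
    (nonposRoots_comp_geometricRep_subset cs w)

lemma ncard_nonposRoots_comp_simpleReflection_lt (hy : (nonposRoots cs y).Finite) {i : B}
    (hi : y (simpleRoot i) < 0) :
    (nonposRoots cs (y ∘ₗ simpleReflection M i)).ncard < (nonposRoots cs y).ncard := by
  refine (Set.ncard_le_ncard_of_injOn (t := nonposRoots cs y \ {simpleRoot i})
    (simpleReflection M i) ?_ ?_ (hy.subset Set.sdiff_subset)).trans_lt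
    (Set.ncard_sdiff_singleton_lt_of_mem ⟨.simpleRoot i, simpleRoot_nonneg i, hi.le⟩ hy)
  · rintro β ⟨hβ, hβ₀, hyβ⟩
    have hne : β ≠ simpleRoot i := by
      rintro rfl
      rw [LinearMap.comp_apply, simpleReflection_simpleRoot_self, map_neg] at hyβ
      linarith
    refine ⟨⟨hβ.map_simpleReflection i, hβ.simpleReflection_nonneg hβ₀ hne, hyβ⟩,
      fun h ↦ hβ.ne_zero ?_⟩
    have hβi : β = -simpleRoot i := by
      rw [← simpleReflection_simpleRoot_self M, ← Set.mem_singleton_iff.mp h,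
        simpleReflection_simpleReflection]
    exact le_antisymm (by rw [hβi]; simp) hβ₀
  · exact (Function.LeftInverse.injective (simpleReflection_simpleReflection M i)).injOn

lemma exists_isDominant_comp_geometricRep (hy : (nonposRoots cs y).Finite) :
    ∃ w : W, IsDominant (y ∘ₗ geometricRep cs w) := by
  induction h : (nonposRoots cs y).ncard using Nat.strong_induction_on generalizing y with
  | _ n ih =>
  subst h
  by_cases hdom : IsDominant y
  · exact ⟨1, by rwa [map_one, End.one_eq_id, LinearMap.comp_id]⟩
  simp only [IsDominant, not_forall, not_le] at hdom
  obtain ⟨i, hi⟩ := hdom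
  have hsy := nonposRoots_comp_geometricRep_finite hy (cs.simple i)
  rw [geometricRep_simple] at hsy
  obtain ⟨w, hw⟩ := ih _ (ncard_nonposRoots_comp_simpleReflection_lt cs hy hi) hsy rfl
  refine ⟨cs.simple i * w, ?_⟩
  rwa [map_mul, geometricRep_simple, End.mul_eq_comp, ← LinearMap.comp_assoc]

/-- The stabilizer of a functional under the dual of the geometric representation. -/
def dualStabilizer (y : Dual ℝ (B →₀ ℝ)) : Subgroup W where
  carrier := {w | ∀ v, y (geometricRep cs w v) = y v}
  one_mem' v := by rw [map_one, End.one_apply]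
  mul_mem' hu hw v := by rw [geometricRep_mul_apply, hu, hw]
  inv_mem' hw v := by rw [← hw, Representation.self_inv_apply]

variable {cs}

lemma mem_dualStabilizer {w : W} :
    w ∈ dualStabilizer cs y ↔ ∀ v, y (geometricRep cs w v) = y v :=
  Iff.rfl

lemma simple_mem_dualStabilizer {i : B} (hi : y (simpleRoot i) = 0) :
    cs.simple i ∈ dualStabilizer cs y := by
  rw [mem_dualStabilizer]
  intro v
  rw [geometricRep_simple, simpleReflection_apply, map_sub, map_smul, hi, smul_zero, sub_zero]

lemma IsDominant.dualStabilizer_eq_closure (hy : IsDominant y) :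
    dualStabilizer cs y = Subgroup.closure (cs.simple '' {i | y (simpleRoot i) = 0}) := by
  refine le_antisymm (fun w hw ↦ ?_) ?_
  · induction h : cs.length w using Nat.strong_induction_on generalizing w with
    | _ n ih =>
    subst h
    obtain rfl | hw₁ := eq_or_ne w 1
    · exact one_mem _
    obtain ⟨i, hi⟩ := cs.exists_rightDescent_of_ne_one hw₁
    have hyi : y (simpleRoot i) = 0 := by
      refine le_antisymm ?_ (hy i)
      rw [← mem_dualStabilizer.mp hw]
      exact hy.apply_nonpos (geometricRep_simpleRoot_nonpos_of_isRightDescent cs hi)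
    rw [← cs.simple_mul_simple_cancel_right (w := w) i]
    exact mul_mem (ih _ hi _ (mul_mem hw (simple_mem_dualStabilizer hyi)) rfl)
      (Subgroup.subset_closure ⟨i, hyi, rfl⟩)
  · rw [Subgroup.closure_le]
    rintro _ ⟨i, hi, rfl⟩
    exact simple_mem_dualStabilizer hi

lemma IsDominant.dualStabilizer_finite (hy : IsDominant y) (hfin : (nonposRoots cs y).Finite) :
    (dualStabilizer cs y : Set W).Finite := by
  refine Set.Finite.of_finite_image (hfin.finite_subsets.subset ?_)
    (inversionSet_injective cs).injOn
  rintro _ ⟨w, hw, rfl⟩ β ⟨hβ, hβ₀, hwβ⟩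
  refine ⟨hβ, hβ₀, ?_⟩
  rw [← mem_dualStabilizer.mp hw]
  exact hy.apply_nonpos hwβ

variable (B) in
/-- The functional taking the value `1` on every simple root. -/
noncomputable def height : Dual ℝ (B →₀ ℝ) :=
  Finsupp.linearCombination ℝ fun _ ↦ 1

lemma height_pos {v : B →₀ ℝ} (hv : 0 ≤ v) (hv₀ : v ≠ 0) : 0 < height B v := by
  rw [height, Finsupp.linearCombination_apply]
  refine Finset.sum_pos (fun i hi ↦ ?_) (Finsupp.support_nonempty_iff.mpr hv₀)
  simpa using (hv i).lt_of_ne' (Finsupp.mem_support_iff.mp hi)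

lemma nonposRoots_height : nonposRoots cs (height B) = ∅ :=
  Set.eq_empty_of_forall_notMem fun _ ⟨hβ, hβ₀, hhβ⟩ ↦ hhβ.not_gt (height_pos hβ₀ hβ.ne_zero)

lemma exists_nonposRoots_finite_le_dualStabilizer (G : Subgroup W) [Finite G] :
    ∃ y, (nonposRoots cs y).Finite ∧ G ≤ dualStabilizer cs y := by
  have := Fintype.ofFinite G
  refine ⟨∑ g : G, height B ∘ₗ geometricRep cs g, ?_, fun h hh ↦ ?_⟩
  · have hheight : (nonposRoots cs (height B)).Finite := by
      rw [nonposRoots_height]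
      exact Set.finite_empty
    exact (Finset.univ.finite_toSet.biUnion fun g _ ↦
      nonposRoots_comp_geometricRep_finite hheight g.1).subset
      (nonposRoots_sum_subset cs _ _ Finset.univ_nonempty)
  · rw [mem_dualStabilizer]
    intro v
    simp only [LinearMap.sum_apply, LinearMap.comp_apply, ← geometricRep_mul_apply]
    exact Fintype.sum_equiv (Equiv.mulRight (⟨h, hh⟩ : G))
      (fun g ↦ height B (geometricRep cs (g * h) v))
      (fun g ↦ height B (geometricRep cs g v)) fun g ↦ by rw [Equiv.coe_mulRight, Subgroup.coe_mul]

theorem exists_conj_mem_closure_simple (cs : CoxeterSystem M W) (G : Subgroup W) [Finite G] :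
    ∃ J : Set B, (Subgroup.closure (cs.simple '' J) : Set W).Finite ∧
      ∃ w : W, ∀ g ∈ G, w⁻¹ * g * w ∈ Subgroup.closure (cs.simple '' J) := by
  obtain ⟨y, hy, hG⟩ := exists_nonposRoots_finite_le_dualStabilizer (cs := cs) G
  obtain ⟨w, hw⟩ := exists_isDominant_comp_geometricRep cs hy
  have hfin := hw.dualStabilizer_finite (nonposRoots_comp_geometricRep_finite hy w)
  refine ⟨_, hw.dualStabilizer_eq_closure (cs := cs) ▸ hfin, w, fun g hg ↦ ?_⟩
  rw [← hw.dualStabilizer_eq_closure, mem_dualStabilizer]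
  intro v
  rw [LinearMap.comp_apply, ← geometricRep_mul_apply, mul_assoc, mul_inv_cancel_left,
    geometricRep_mul_apply, mem_dualStabilizer.mp (hG hg), LinearMap.comp_apply]

theorem exists_finite_conj_mem_of_finite_subgroup [Finite B] (cs : CoxeterSystem M W) :
    ∃ K : Set W, K.Finite ∧
      ∀ (G : Subgroup W) [Finite G], ∃ w : W, ∀ g ∈ G, w⁻¹ * g * w ∈ K := by
  refine ⟨⋃ J ∈ {J : Set B | (Subgroup.closure (cs.simple '' J) : Set W).Finite},
    Subgroup.closure (cs.simple '' J), (Set.toFinite _).biUnion fun _ ↦ id, fun G _ ↦ ?_⟩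
  obtain ⟨J, hJ, w, hw⟩ := exists_conj_mem_closure_simple cs G
  exact ⟨w, fun g hg ↦ Set.mem_biUnion hJ (hw g hg)⟩

end TitsCone

section FiniteIndex

open MulAction Pointwise

variable {G X : Type*} [Group G] [MulAction G X]

lemma fixingSubgroup_finiteIndex {s : Set X} (hs : s.Finite) (hGs : ∀ g : G, ∀ x ∈ s, g • x ∈ s) :
    (fixingSubgroup G s).FiniteIndex := by
  have hinf : fixingSubgroup G s = ⨅ x : s, stabilizer G (x : X) := by
    ext g
    simp [mem_fixingSubgroup_iff, Subgroup.mem_iInf]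
  have := hs.to_subtype
  rw [hinf]
  refine Subgroup.finiteIndex_iInf fun x ↦ ⟨?_⟩
  have horbit : (orbit G (x : X)).Finite := hs.subset <| Set.range_subset_iff.mpr (hGs · x x.2)
  rw [index_stabilizer]
  exact Set.ncard_ne_zero_of_mem (mem_orbit_self _) horbit

lemma exists_finiteIndex_smul_mem_orbit (N : Subgroup G) [N.Normal] {s : Set X}
    (hGs : ∀ g : G, ∀ x ∈ s, g • x ∈ s) (hs : (orbit N '' s).Finite) :
    ∃ A : Subgroup G, A.FiniteIndex ∧ ∀ a ∈ A, ∀ x ∈ s, a • x ∈ orbit N x := by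
  refine ⟨fixingSubgroup G (orbit N '' s), fixingSubgroup_finiteIndex hs ?_, fun a ha x hx ↦ ?_⟩
  · rintro g _ ⟨x, hx, rfl⟩
    exact ⟨g • x, hGs g x hx, (smul_orbit_eq_orbit_smul N x g).symm⟩
  · rw [← orbit_eq_iff, ← smul_orbit_eq_orbit_smul]
    exact (mem_fixingSubgroup_iff G).mp ha _ ⟨x, hx, rfl⟩

end FiniteIndex

section Automorphisms

open MulAction

variable {W : Type*} [Group W]

instance normal_range_mulAutConj : (MulAut.conj : W →* MulAut W).range.Normal where
  conj_mem := by
    rintro _ ⟨w, rfl⟩ α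
    exact ⟨α w, by ext; simp⟩

lemma mem_orbit_range_conj_iff {p q : W × W} :
    q ∈ orbit (MulAut.conj : W →* MulAut W).range p ↔
      ∃ w : W, (w * p.1 * w⁻¹, w * p.2 * w⁻¹) = q := by
  simp [mem_orbit_iff, Subgroup.smul_def, Prod.ext_iff]

lemma AdjacentElems.map {s s' : W} (h : AdjacentElems s s') (α : MulAut W) :
    AdjacentElems (α s) (α s') := by
  have himage : (Subgroup.closure {α s, α s'} : Set W) = α '' Subgroup.closure {s, s'} := by
    rw [← Set.image_pair, ← α.coe_toMonoidHom, ← MonoidHom.map_closure, Subgroup.coe_map]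
  rw [AdjacentElems, himage]
  exact h.image α

lemma finite_orbit_range_conj_image_adjacentElems {K : Set W} (hK : K.Finite)
    (hconj : ∀ (G : Subgroup W) [Finite G], ∃ w : W, ∀ g ∈ G, w⁻¹ * g * w ∈ K) :
    (orbit (MulAut.conj : W →* MulAut W).range '' {p : W × W | AdjacentElems p.1 p.2}).Finite := by
  refine ((hK.prod hK).image (orbit (MulAut.conj : W →* MulAut W).range)).subset ?_
  rintro _ ⟨⟨s, s'⟩, hss', rfl⟩
  have : Finite (Subgroup.closure {s, s'}) := hss'.to_subtype
  obtain ⟨w, hw⟩ := hconj (Subgroup.closure {s, s'})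
  refine ⟨(w⁻¹ * s * w, w⁻¹ * s' * w), ⟨hw s ?_, hw s' ?_⟩,
    orbit_eq_iff.mpr (mem_orbit_range_conj_iff.mpr ⟨w⁻¹, by simp⟩)⟩
  all_goals exact Subgroup.mem_closure_of_mem (by simp)

lemma IsCoxeterGeneratingSet.image {S : Set W} (hS : IsCoxeterGeneratingSet S) (α : W ≃* W) :
    IsCoxeterGeneratingSet (α '' S) := by
  obtain ⟨hfin, M, cs, hcs⟩ := hS
  let e := α.toEquiv.image S
  refine ⟨hfin.image α, M.reindex e, (cs.map α).reindex e, fun ⟨_, s, hs, rfl⟩ ↦ ?_⟩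
  have hsymm : e.symm ⟨α s, s, hs, rfl⟩ = ⟨s, hs⟩ := e.symm_apply_apply ⟨s, hs⟩
  rw [CoxeterSystem.reindex_simple, CoxeterSystem.map_simple, hsymm, hcs]

theorem exists_finite_index_angle_compatible_subgroup_general
    (hW : ∃ S : Set W, IsCoxeterGeneratingSet S) :
    ∃ A : Subgroup (MulAut W), A.FiniteIndex ∧
      ∀ α ∈ A, ∀ S : Set W, AngleCompatible S ((α : W ≃* W) '' S) := by
  obtain ⟨S₀, hS₀, M, cs, -⟩ := hW
  have := hS₀.to_subtype
  obtain ⟨K, hK, hconj⟩ := exists_finite_conj_mem_of_finite_subgroup cs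
  obtain ⟨A, hA, horbit⟩ := exists_finiteIndex_smul_mem_orbit (MulAut.conj : W →* MulAut W).range
    (fun α p (hp : AdjacentElems p.1 p.2) ↦ hp.map α)
    (finite_orbit_range_conj_image_adjacentElems hK hconj)
  refine ⟨A, hA, fun α hα S s hs s' hs' hfin ↦ ?_⟩
  obtain ⟨w, hw⟩ := mem_orbit_range_conj_iff.mp (horbit α hα (s, s') hfin)
  obtain ⟨hws, hws'⟩ : w * s * w⁻¹ = α s ∧ w * s' * w⁻¹ = α s' := Prod.mk.inj hw
  exact ⟨w, α s, Set.mem_image_of_mem α hs, α s', Set.mem_image_of_mem α hs', by rw [hws, hws']⟩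

end Automorphisms

/-- The automorphism group of a Coxeter group contains a finite index
subgroup all of whose elements map every Coxeter generating set to an angle-compatible
Coxeter generating set. -/
theorem exists_finite_index_angle_compatible_subgroup
    {W : Type*} [Group W] (hW : ∃ S : Set W, IsCoxeterGeneratingSet S) :
    ∃ A : Subgroup (MulAut W), A.FiniteIndex ∧
      ∀ α ∈ A, ∀ S : Set W, IsCoxeterGeneratingSet S →
        IsCoxeterGeneratingSet ((α : W ≃* W) '' S) ∧
        AngleCompatible S ((α : W ≃* W) '' S) := by
  obtain ⟨A, hA, hcompat⟩ := exists_finite_index_angle_compatible_subgroup_general hW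
  exact ⟨A, hA, fun α hα S hS ↦ ⟨hS.image α, hcompat α hα S⟩⟩
end

section
/- Let S and R be Coxeter generating sets of a group W. If every element of S is conjugate in W to some element of R, then every element of R is conjugate in W to some element of S. -/
/-! Simple reflections joined by an odd entry of the Coxeter matrix are conjugate, so any choice of
signs that is constant on conjugacy classes respects the Coxeter relations and extends to a
character `W → {±1}`. Take the character that is `-1` exactly on the reflections conjugate to a
given reflection `t`. If no element of `S` were conjugate to `t`, it would be trivial on `S`, hence
on all of `W`, although it maps `t` to `-1`. -/

theorem isConj_of_mul_pow_eq_one_of_odd {G : Type*} [Group G] {a b : G} {n : ℕ}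
    (ha : a * a = 1) (hb : b * b = 1) (hn : Odd n) (hab : (a * b) ^ n = 1) : IsConj a b := by
  obtain ⟨k, rfl⟩ := hn
  have ha_inv : a⁻¹ = a := inv_eq_of_mul_eq_one_left ha
  have hb_inv : b⁻¹ = b := inv_eq_of_mul_eq_one_left hb
  have h_mul : (a * b) ^ k * a * (b * (a * b) ^ k) = 1 := by
    rw [← hab, two_mul, add_right_comm, pow_add, pow_succ]
    simp only [mul_assoc]
  have h_inv : (b * (a * b) ^ k)⁻¹ = b * (a * b) ^ k := by
    rw [mul_inv_rev, ← inv_pow, mul_inv_rev, ha_inv, hb_inv, mul_pow_mul]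
  refine isConj_iff.2 ⟨(a * b) ^ k, mul_inv_eq_iff_eq_mul.2 ?_⟩
  rw [eq_inv_of_mul_eq_one_left h_mul, h_inv]

section CoxeterSystem

variable {B W : Type*} [Group W] {M : CoxeterMatrix B} (cs : CoxeterSystem M W)

theorem isConj_simple_of_odd {i j : B} (hij : Odd (M i j)) :
    IsConj (cs.simple i) (cs.simple j) :=
  isConj_of_mul_pow_eq_one_of_odd (cs.simple_mul_simple_self i) (cs.simple_mul_simple_self j) hij
    (cs.simple_mul_simple_pow i j)

theorem isLiftable_comp_conjClasses_mk_simple (f : ConjClasses W → ℤˣ) :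
    M.IsLiftable fun i ↦ f (ConjClasses.mk (cs.simple i)) := by
  intro i j
  rcases Nat.even_or_odd (M i j) with h_even | h_odd
  · obtain ⟨k, hk⟩ := even_iff_exists_two_mul.1 h_even
    rw [hk, pow_mul, Int.units_sq, one_pow]
  · have h_mk : ConjClasses.mk (cs.simple i) = ConjClasses.mk (cs.simple j) :=
      ConjClasses.mk_eq_mk_iff_isConj.2 (isConj_simple_of_odd cs h_odd)
    simp only [h_mk, Int.units_mul_self, one_pow]

/-- The character `W → {±1}` taking a reflection to the sign which `f` assigns to its conjugacy
class. The values of `f` on classes containing no reflection are ignored. -/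
noncomputable def reflectionCharacter (f : ConjClasses W → ℤˣ) : W →* ℤˣ :=
  cs.lift ⟨_, isLiftable_comp_conjClasses_mk_simple cs f⟩

theorem reflectionCharacter_apply_of_isReflection (f : ConjClasses W → ℤˣ) {t : W}
    (ht : cs.IsReflection t) : reflectionCharacter cs f t = f (ConjClasses.mk t) := by
  obtain ⟨w, i, rfl⟩ := ht
  have h_mk : ConjClasses.mk (w * cs.simple i * w⁻¹) = ConjClasses.mk (cs.simple i) :=
    ConjClasses.mk_eq_mk_iff_isConj.2 (isConj_iff.2 ⟨w, rfl⟩).symm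
  have h_simple : reflectionCharacter cs f (cs.simple i) = f (ConjClasses.mk (cs.simple i)) :=
    cs.lift_apply_simple (isLiftable_comp_conjClasses_mk_simple cs f) i
  rw [map_mul, map_mul, map_inv, mul_inv_cancel_comm, h_simple, h_mk]

theorem reflection_compatibility_symm_general {S : Set W}
    (hS : Subgroup.normalClosure S = ⊤) (h : ∀ s ∈ S, cs.IsReflection s) {t : W}
    (ht : cs.IsReflection t) : ∃ s ∈ S, IsConj t s := by
  classical
  by_contra! h_not_conj
  let χ : W →* ℤˣ := reflectionCharacter cs (Pi.mulSingle (ConjClasses.mk t) (-1))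
  have h_S : S ⊆ χ.ker := fun s hs ↦ by
    have h_ne : ConjClasses.mk s ≠ ConjClasses.mk t := fun h_eq ↦
      h_not_conj s hs (ConjClasses.mk_eq_mk_iff_isConj.1 h_eq).symm
    exact (reflectionCharacter_apply_of_isReflection cs _ (h s hs)).trans
      (Pi.mulSingle_eq_of_ne h_ne _)
  have h_one : χ t = 1 :=
    MonoidHom.mem_ker.1 (Subgroup.normalClosure_le_normal h_S (hS ▸ Subgroup.mem_top t))
  have h_neg_one : χ t = -1 :=
    (reflectionCharacter_apply_of_isReflection cs _ ht).trans (Pi.mulSingle_eq_same _ _)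
  exact absurd (h_one.symm.trans h_neg_one) (by decide)

end CoxeterSystem

namespace IsCoxeterGeneratingSet

variable {W : Type*} [Group W] {S : Set W}

theorem closure_eq_top (hS : IsCoxeterGeneratingSet S) : Subgroup.closure S = ⊤ := by
  obtain ⟨-, M, cs, h_simple⟩ := hS
  rw [← cs.subgroup_closure_range_simple, funext h_simple, Subtype.range_coe]

theorem normalClosure_eq_top (hS : IsCoxeterGeneratingSet S) : Subgroup.normalClosure S = ⊤ :=
  top_unique (hS.closure_eq_top.ge.trans Subgroup.closure_le_normalClosure)

theorem exists_isReflection_iff (hS : IsCoxeterGeneratingSet S) :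
    ∃ (M : CoxeterMatrix S) (cs : CoxeterSystem M W),
      ∀ t, cs.IsReflection t ↔ ∃ w : W, ∃ s ∈ S, w * t * w⁻¹ = s := by
  obtain ⟨-, M, cs, h_simple⟩ := hS
  refine ⟨M, cs, fun t ↦ ⟨?_, ?_⟩⟩
  · rintro ⟨w, s, rfl⟩
    exact ⟨w⁻¹, s, s.2, by rw [h_simple]; group⟩
  · rintro ⟨w, s, hs, h_conj⟩
    lift s to S using hs
    rw [← cs.isReflection_conj_iff w, h_conj, ← h_simple]
    exact cs.isReflection_simple s

end IsCoxeterGeneratingSet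

/-- Reflection-compatibility of Coxeter generating sets is symmetric. -/
theorem reflection_compatibility_symm
    {W : Type*} [Group W] (S R : Set W)
    (hS : IsCoxeterGeneratingSet S) (hR : IsCoxeterGeneratingSet R)
    (h : ∀ s ∈ S, ∃ w : W, ∃ r ∈ R, w * s * w⁻¹ = r) :
    ∀ r ∈ R, ∃ w : W, ∃ s ∈ S, w * r * w⁻¹ = s := by
  obtain ⟨M, cs, h_refl⟩ := hR.exists_isReflection_iff
  intro r hr
  obtain ⟨s, hs, h_conj⟩ := reflection_compatibility_symm_general cs hS.normalClosure_eq_top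
    (fun s hs ↦ (h_refl s).2 (h s hs)) ((h_refl r).2 ⟨1, r, hr, by group⟩)
  exact (isConj_iff.1 h_conj).imp fun w hw ↦ ⟨s, hs, hw⟩
end
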